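/- Fix an integer ℓ ≥ 0 and δ ∈ ℝ. There exist a constant C > 0 and an integer N₀ such that for every N ≥ N₀ and every choice of a unit eigenvector u_N of H(δ)H(δ)ᵀ corresponding to its largest eigenvalue: |r_{N−1−ℓ}(N) − δ·G(a,ξ)·(C₁(ℓ)·cos((N−1)ξ + φ) + C₂(ℓ)·sin((N−1)ξ + φ))| ≤ C·a^{−L(N)}. -/

import Mathlib

open Filter Matrix

/-- Hankelization (diagonal averaging): the `j`-th value is the average of the
entries `Y i k` with `i + k = j`. -/
noncomputable def hankelize {L K : ℕ} (Y : Matrix (Fin L) (Fin K) ℝ) (j : ℕ) : ℝ :=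
  (∑ i : Fin L, ∑ k : Fin K, if (i : ℕ) + (k : ℕ) = j then Y i k else 0) /
  (∑ i : Fin L, ∑ k : Fin K, if (i : ℕ) + (k : ℕ) = j then (1 : ℝ) else 0)

/-- The `L × K` Hankel (trajectory) matrix of a series `x`. -/
noncomputable def hankelOf (x : ℕ → ℝ) (L K : ℕ) : Matrix (Fin L) (Fin K) ℝ :=
  Matrix.of fun i k => x ((i : ℕ) + (k : ℕ))

/-- Squared Euclidean norm of a vector. -/
noncomputable def normSq {M : ℕ} (w : Fin M → ℝ) : ℝ := ∑ i, w i ^ 2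

/-- `u` is a unit eigenvector of `A` corresponding to its largest eigenvalue. -/
def IsTopEigenvector {L : ℕ} (A : Matrix (Fin L) (Fin L) ℝ) (u : Fin L → ℝ) : Prop :=
  normSq u = 1 ∧ ∃ μ : ℝ, A.mulVec u = μ • u ∧
    ∀ (ν : ℝ) (v : Fin L → ℝ), v ≠ 0 → A.mulVec v = ν • v → ν ≤ μ

/-- The exponential signal `x_n = a^n`. -/
noncomputable def expSignal (a : ℝ) : ℕ → ℝ := fun n => a ^ n

/-- The harmonic noise `e_n = cos (ξ n + φ)`. -/
noncomputable def cosNoise (ξ φ : ℝ) : ℕ → ℝ := fun n => Real.cos (ξ * (n : ℝ) + φ)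

/-- The vector `W_M = (1, a, …, a^{M-1})ᵀ`. -/
noncomputable def Wvec (a : ℝ) (M : ℕ) : Fin M → ℝ := fun i => a ^ (i : ℕ)

/-- `ρ_j = (𝒮(P₀ E Hᵀ S₀ H))_j + (𝒮(P₀⊥ E))_j`. -/
noncomputable def rho (a ξ φ : ℝ) (L K : ℕ) (j : ℕ) : ℝ :=
  let H := hankelOf (expSignal a) L K
  let E := hankelOf (cosNoise ξ φ) L K
  let P0perp : Matrix (Fin L) (Fin L) ℝ :=
    (normSq (Wvec a L))⁻¹ • Matrix.vecMulVec (Wvec a L) (Wvec a L)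
  let P0 : Matrix (Fin L) (Fin L) ℝ := 1 - P0perp
  let S0 : Matrix (Fin L) (Fin L) ℝ :=
    ((normSq (Wvec a L)) ^ 2 * normSq (Wvec a K))⁻¹ • Matrix.vecMulVec (Wvec a L) (Wvec a L)
  hankelize (P0 * E * Hᵀ * S0 * H) j + hankelize (P0perp * E) j

/-- The matrix `H(δ)H(δ)ᵀ` for the perturbed series `a^n + δ cos(ξ n + φ)`. -/
noncomputable def HdeltaSq (a ξ φ δ : ℝ) (L K : ℕ) : Matrix (Fin L) (Fin L) ℝ :=
  let Hδ := hankelOf (expSignal a) L K + δ • hankelOf (cosNoise ξ φ) L K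
  Hδ * Hδᵀ

/-- The SSA reconstruction error `r_j = (𝒮(u uᵀ H(δ)))_j - a^j`. -/
noncomputable def recErr (a ξ φ δ : ℝ) (L K : ℕ) (u : Fin L → ℝ) (j : ℕ) : ℝ :=
  hankelize (Matrix.vecMulVec u u *
    (hankelOf (expSignal a) L K + δ • hankelOf (cosNoise ξ φ) L K)) j - a ^ j

/-- `G(a,ξ) = (a²-1)/(a(a²+1-2a cos ξ))`. -/
noncomputable def Gfun (a ξ : ℝ) : ℝ := (a ^ 2 - 1) / (a * (a ^ 2 + 1 - 2 * a * Real.cos ξ))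

/-- The coefficient `C₁(ℓ)`. -/
noncomputable def C1 (a ξ : ℝ) (ℓ : ℕ) : ℝ :=
  (2 / (1 + (ℓ : ℝ))) * (a * Real.cos ((ℓ : ℝ) * ξ) - a ^ (-(ℓ : ℤ)) * Real.cos ξ)
  - (a ^ 2 + 1 - 2 * a * Real.cos ξ - 2 * Real.sin ξ ^ 2) * Gfun a ξ * a ^ (-(ℓ : ℤ))

/-- The coefficient `C₂(ℓ)`. -/
noncomputable def C2 (a ξ : ℝ) (ℓ : ℕ) : ℝ :=
  (2 / (1 + (ℓ : ℝ))) * (a * Real.sin ((ℓ : ℝ) * ξ) + a ^ (-(ℓ : ℤ)) * Real.sin ξ)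
  - 2 * Real.sin ξ * (a - Real.cos ξ) * Gfun a ξ * a ^ (-(ℓ : ℤ))

/-- `D(ℓ) = G(a,ξ)·√(C₁(ℓ)² + C₂(ℓ)²)`. -/
noncomputable def Dfun (a ξ : ℝ) (ℓ : ℕ) : ℝ :=
  Gfun a ξ * Real.sqrt (C1 a ξ ℓ ^ 2 + C2 a ξ ℓ ^ 2)

/-!
The signal matrix is the rank-one matrix `w_L w_Kᵀ` with `w_M = (1, a, …, a^{M-1})`, whose only
singular value `s = ‖w_L‖ ‖w_K‖` is at least `a^{N-1}`, while the noise matrix `F = δE` has norm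
`O(N)`. So the leading left singular vector `u` of `w_L w_Kᵀ + F` satisfies
`sin ∠(u, w_L) = O(‖F‖ / s)`, and with `P`, `Q` the projections onto the lines of `w_L` and `w_K`,
`u uᵀ (w_L w_Kᵀ + F) = w_L w_Kᵀ + P F + F Q - P F Q + O(‖F‖² / s)`.

Counted backwards from the last row and column, `w_M` is proportional to `1, a⁻¹, a⁻², …`, so the
entries of `P F + F Q - P F Q` are built from partial sums of geometrically weighted series. They
converge to closed forms at rate `O(a^{-L})`, uniformly in the entry, and averaging the limits over
the `ℓ`-th antidiagonal from the end gives the coefficients `C₁(ℓ)` and `C₂(ℓ)`. Since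
`N² a^{-(N-1)} = O(a^{-L})`, the quadratic remainder is absorbed.
-/

section RankOnePerturbation

open Submodule InnerProductSpace ContinuousLinearMap
open scoped InnerProduct RealInnerProductSpace

variable {U V : Type*} [NormedAddCommGroup U] [InnerProductSpace ℝ U]
  [NormedAddCommGroup V] [InnerProductSpace ℝ V] {F : V →L[ℝ] U} {w u : U} {z : V} {s : ℝ}

theorem starProjection_orthogonal_unit_singleton_apply (hw : ‖w‖ = 1) (u : U) :
    (ℝ ∙ w)ᗮ.starProjection u = u - ⟪w, u⟫ • w := by
  rw [starProjection_orthogonal', _root_.sub_apply, starProjection_unit_singleton ℝ hw,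
    one_apply_eq_self]

theorem sq_norm_starProjection_orthogonal_singleton (hw : ‖w‖ = 1) (hu : ‖u‖ = 1) :
    ‖(ℝ ∙ w)ᗮ.starProjection u‖ ^ 2 = 1 - ⟪w, u⟫ ^ 2 := by
  have pythagoras := norm_sq_eq_add_norm_sq_starProjection u (ℝ ∙ w)
  rw [starProjection_unit_singleton ℝ hw, norm_smul, hw, hu, Real.norm_eq_abs, mul_one, sq_abs]
    at pythagoras
  linarith

theorem norm_inner_smul_sub (hw : ‖w‖ = 1) (hu : ‖u‖ = 1) :
    ‖⟪w, u⟫ • u - w‖ = ‖(ℝ ∙ w)ᗮ.starProjection u‖ := by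
  rw [← sq_eq_sq₀ (norm_nonneg _) (norm_nonneg _),
    sq_norm_starProjection_orthogonal_singleton hw hu, norm_sub_sq_real, norm_smul, hw, hu,
    real_inner_smul_left, real_inner_comm, Real.norm_eq_abs, mul_one, sq_abs]
  ring

theorem norm_starProjection_singleton_sub_le (hw : ‖w‖ = 1) (hu : ‖u‖ = 1) :
    ‖(ℝ ∙ u).starProjection - (ℝ ∙ w).starProjection‖ ≤
      2 * ‖(ℝ ∙ w)ᗮ.starProjection u‖ := by
  have decomposition : (ℝ ∙ u).starProjection - (ℝ ∙ w).starProjection =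
      rankOne ℝ u ((ℝ ∙ w)ᗮ.starProjection u) + rankOne ℝ (⟪w, u⟫ • u - w) w := by
    ext x
    rw [starProjection_orthogonal_unit_singleton_apply hw, _root_.sub_apply,
      starProjection_unit_singleton ℝ hu, starProjection_unit_singleton ℝ hw, _root_.add_apply,
      rankOne_apply, rankOne_apply, inner_sub_left, real_inner_smul_left]
    module
  rw [decomposition]
  refine (norm_add_le _ _).trans_eq ?_
  rw [norm_rankOne, norm_rankOne, norm_inner_smul_sub hw hu, hw, hu]
  ring

theorem starProjection_comp_sub_eq (hw : ‖w‖ = 1) (hz : ‖z‖ = 1) (hu : ‖u‖ = 1) :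
    (ℝ ∙ u).starProjection ∘L (s • rankOne ℝ w z + F) - (s • rankOne ℝ w z
        + (ℝ ∙ w).starProjection ∘L F
        + (ℝ ∙ w)ᗮ.starProjection ∘L F ∘L (ℝ ∙ z).starProjection) =
      ((ℝ ∙ u).starProjection - (ℝ ∙ w).starProjection) ∘L F
        - rankOne ℝ ((s * ‖(ℝ ∙ w)ᗮ.starProjection u‖ ^ 2) • w
          + ((ℝ ∙ w)ᗮ.starProjection (F z) - (s * ⟪w, u⟫) • (ℝ ∙ w)ᗮ.starProjection u)) z := by
  rw [sq_norm_starProjection_orthogonal_singleton hw hu]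
  ext x
  simp only [_root_.sub_apply, _root_.add_apply, _root_.smul_apply,
    ContinuousLinearMap.comp_apply, rankOne_apply,
    starProjection_unit_singleton ℝ hu, starProjection_unit_singleton ℝ hw,
    starProjection_unit_singleton ℝ hz, starProjection_orthogonal_unit_singleton_apply hw,
    map_smul, inner_add_right, real_inner_smul_right, real_inner_comm w u]
  module

variable [CompleteSpace U] [CompleteSpace V]

/-- A unit left singular vector of `A` for its largest singular value, which is `‖A† u‖`. -/
structure IsTopLeftSingularVector (A : V →L[ℝ] U) (u : U) : Prop where
  norm_eq_one : ‖u‖ = 1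
  apply_adjoint : A ((A†) u) = ‖(A†) u‖ ^ 2 • u
  norm_adjoint_le : ∀ x, ‖(A†) x‖ ≤ ‖(A†) u‖ * ‖x‖

theorem adjoint_smul_rankOne_add_apply (s : ℝ) (w : U) (z : V) (F : V →L[ℝ] U) (x : U) :
    ((s • rankOne ℝ w z + F)†) x = (s * ⟪w, x⟫) • z + (F†) x := by
  simp [mul_smul]

theorem norm_adjoint_apply_le (F : V →L[ℝ] U) {x : U} (hx : ‖x‖ = 1) : ‖(F†) x‖ ≤ ‖F‖ := by
  simpa [hx] using (F†).le_opNorm x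

theorem sub_norm_le_norm_adjoint_apply (hw : ‖w‖ = 1) (hz : ‖z‖ = 1)
    (hu : IsTopLeftSingularVector (s • rankOne ℝ w z + F) u) :
    s - ‖F‖ ≤ ‖((s • rankOne ℝ w z + F)†) u‖ := by
  have adjoint_w : ((s • rankOne ℝ w z + F)†) w = s • z + (F†) w := by
    rw [adjoint_smul_rankOne_add_apply, real_inner_self_eq_norm_sq, hw]; simp
  calc s - ‖F‖ ≤ ‖s • z‖ - ‖(F†) w‖ := by
        rw [norm_smul, hz, mul_one]
        exact sub_le_sub (Real.le_norm_self s) (norm_adjoint_apply_le F hw)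
    _ ≤ ‖((s • rankOne ℝ w z + F)†) w‖ := by
        rw [adjoint_w]; exact norm_sub_le_norm_add _ _
    _ ≤ ‖((s • rankOne ℝ w z + F)†) u‖ := by simpa [hw] using hu.norm_adjoint_le w

theorem sq_norm_smul_starProjection_orthogonal
    (hu : IsTopLeftSingularVector (s • rankOne ℝ w z + F) u) :
    ‖((s • rankOne ℝ w z + F)†) u‖ ^ 2 • (ℝ ∙ w)ᗮ.starProjection u =
      (ℝ ∙ w)ᗮ.starProjection (F (((s • rankOne ℝ w z + F)†) u)) := by
  have w_killed : (ℝ ∙ w)ᗮ.starProjection w = 0 :=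
    starProjection_orthogonal_apply_eq_zero (mem_span_singleton_self w)
  rw [← map_smul, ← hu.apply_adjoint]
  generalize ((s • rankOne ℝ w z + F)†) u = g
  simp only [_root_.add_apply, _root_.smul_apply, rankOne_apply, map_add, map_smul,
    w_killed, smul_zero, zero_add]

/-- `sin ∠(u, w) = O(‖F‖ / s)`. -/
theorem norm_starProjection_orthogonal_le (hw : ‖w‖ = 1) (hz : ‖z‖ = 1) (hs : 0 < s)
    (hF : 4 * ‖F‖ ≤ s) (hu : IsTopLeftSingularVector (s • rankOne ℝ w z + F) u) :
    ‖(ℝ ∙ w)ᗮ.starProjection u‖ ≤ 4 / 3 * ‖F‖ / s := by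
  have σ_lower := sub_norm_le_norm_adjoint_apply hw hz hu
  have normal_eq := congrArg norm (sq_norm_smul_starProjection_orthogonal hu)
  set σ := ‖((s • rankOne ℝ w z + F)†) u‖
  set n := ‖(ℝ ∙ w)ᗮ.starProjection u‖
  have σ_pos : 0 < σ := by linarith
  have normal_le : σ ^ 2 * n ≤ ‖F‖ * σ := by
    calc σ ^ 2 * n = ‖σ ^ 2 • (ℝ ∙ w)ᗮ.starProjection u‖ := by
          rw [norm_smul, Real.norm_of_nonneg (sq_nonneg σ)]
      _ ≤ ‖F (((s • rankOne ℝ w z + F)†) u)‖ :=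
          normal_eq.trans_le (norm_starProjection_apply_le _ _)
      _ ≤ ‖F‖ * σ := F.le_opNorm _
  have σ_mul_le : σ * n ≤ ‖F‖ := le_of_mul_le_mul_left (by linarith) σ_pos
  rw [le_div_iff₀ hs]
  nlinarith [norm_nonneg ((ℝ ∙ w)ᗮ.starProjection u)]

theorem norm_sq_smul_sub_smul_adjoint_le (hz : ‖z‖ = 1) (hu : ‖u‖ = 1) :
    ‖‖((s • rankOne ℝ w z + F)†) u‖ ^ 2 • z -
        (s * ⟪w, u⟫) • ((s • rankOne ℝ w z + F)†) u‖ ≤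
      ‖F‖ * (‖((s • rankOne ℝ w z + F)†) u‖ + 2 * |s * ⟪w, u⟫|) := by
  set g := ((s • rankOne ℝ w z + F)†) u
  set τ := s * ⟪w, u⟫
  have g_eq : g = τ • z + (F†) u := adjoint_smul_rankOne_add_apply s w z F u
  have Fu_le := norm_adjoint_apply_le F hu
  have norm_τz : ‖τ • z‖ = |τ| := by rw [norm_smul, hz, mul_one, Real.norm_eq_abs]
  have sq_sub_sq_le : |‖g‖ ^ 2 - τ ^ 2| ≤ ‖F‖ * (‖g‖ + |τ|) := by
    have norm_sub_le : |‖g‖ - (|τ|)| ≤ ‖F‖ := by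
      have reverse_triangle := abs_norm_sub_norm_le g (τ • z)
      rw [norm_τz, g_eq, add_sub_cancel_left, ← g_eq] at reverse_triangle
      exact reverse_triangle.trans Fu_le
    rw [← sq_abs τ, sq_sub_sq, abs_mul, abs_of_nonneg (by positivity : 0 ≤ ‖g‖ + |τ|), mul_comm]
    gcongr
  calc ‖‖g‖ ^ 2 • z - τ • g‖ = ‖(‖g‖ ^ 2 - τ ^ 2) • z - τ • (F†) u‖ := by
        congr 1
        linear_combination (norm := module) -τ • g_eq
    _ ≤ |‖g‖ ^ 2 - τ ^ 2| + |τ| * ‖(F†) u‖ := by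
        refine (norm_sub_le _ _).trans_eq ?_
        rw [norm_smul, norm_smul, hz, mul_one, Real.norm_eq_abs, Real.norm_eq_abs]
    _ ≤ ‖F‖ * (‖g‖ + |τ|) + |τ| * ‖F‖ := by gcongr
    _ = ‖F‖ * (‖g‖ + 2 * |τ|) := by ring

theorem norm_starProjection_orthogonal_sub_le (hw : ‖w‖ = 1) (hz : ‖z‖ = 1) (hs : 0 < s)
    (hF : 4 * ‖F‖ ≤ s) (hu : IsTopLeftSingularVector (s • rankOne ℝ w z + F) u) :
    ‖(ℝ ∙ w)ᗮ.starProjection (F z) - (s * ⟪w, u⟫) • (ℝ ∙ w)ᗮ.starProjection u‖ ≤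
      5 * ‖F‖ ^ 2 / s := by
  have σ_lower := sub_norm_le_norm_adjoint_apply hw hz hu
  have normal_eq := sq_norm_smul_starProjection_orthogonal hu
  have approx := norm_sq_smul_sub_smul_adjoint_le (s := s) (w := w) (F := F) hz hu.norm_eq_one
  set g := ((s • rankOne ℝ w z + F)†) u
  set τ := s * ⟪w, u⟫
  set D := (ℝ ∙ w)ᗮ.starProjection (F z) - τ • (ℝ ∙ w)ᗮ.starProjection u
  have D_eq : ‖g‖ ^ 2 • D = (ℝ ∙ w)ᗮ.starProjection (F (‖g‖ ^ 2 • z - τ • g)) := by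
    simp only [D, smul_sub, map_sub, map_smul, ← normal_eq]
    module
  have τ_le : |τ| ≤ s := by
    have cauchy_schwarz := abs_real_inner_le_norm w u
    rw [hw, hu.norm_eq_one, one_mul] at cauchy_schwarz
    rw [abs_mul, abs_of_pos hs]
    exact mul_le_of_le_one_right hs.le cauchy_schwarz
  have D_le : ‖g‖ ^ 2 * ‖D‖ ≤ ‖F‖ * (‖F‖ * (‖g‖ + 2 * |τ|)) := by
    calc ‖g‖ ^ 2 * ‖D‖ = ‖‖g‖ ^ 2 • D‖ := by
          rw [norm_smul, Real.norm_of_nonneg (sq_nonneg _)]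
      _ ≤ ‖F (‖g‖ ^ 2 • z - τ • g)‖ := by
          rw [D_eq]; exact norm_starProjection_apply_le _ _
      _ ≤ ‖F‖ * (‖F‖ * (‖g‖ + 2 * |τ|)) := by grw [F.le_opNorm, approx]
  have g_lower : 3 / 4 * s ≤ ‖g‖ := by linarith
  have g_pos : 0 < ‖g‖ := by linarith
  have g_mul_D_le : ‖g‖ * ‖D‖ ≤ 11 / 3 * ‖F‖ ^ 2 := by
    refine le_of_mul_le_mul_left ?_ g_pos
    nlinarith [sq_nonneg ‖F‖]
  rw [le_div_iff₀ hs]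
  nlinarith [mul_le_mul_of_nonneg_right g_lower (norm_nonneg D), sq_nonneg ‖F‖]

theorem norm_starProjection_comp_sub_le (hw : ‖w‖ = 1) (hz : ‖z‖ = 1) (hs : 0 < s)
    (hF : 4 * ‖F‖ ≤ s) (hu : IsTopLeftSingularVector (s • rankOne ℝ w z + F) u) :
    ‖(ℝ ∙ u).starProjection ∘L (s • rankOne ℝ w z + F) - (s • rankOne ℝ w z
        + (ℝ ∙ w).starProjection ∘L F
        + (ℝ ∙ w)ᗮ.starProjection ∘L F ∘L (ℝ ∙ z).starProjection)‖ ≤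
      10 * ‖F‖ ^ 2 / s := by
  have p_le := norm_starProjection_orthogonal_le hw hz hs hF hu
  have first_order := norm_starProjection_orthogonal_sub_le hw hz hs hF hu
  rw [starProjection_comp_sub_eq hw hz hu.norm_eq_one]
  set p := (ℝ ∙ w)ᗮ.starProjection u
  set D := (ℝ ∙ w)ᗮ.starProjection (F z) - (s * ⟪w, u⟫) • p
  calc _ ≤ ‖(ℝ ∙ u).starProjection - (ℝ ∙ w).starProjection‖ * ‖F‖
        + (‖(s * ‖p‖ ^ 2) • w‖ + ‖D‖) := by
        refine (norm_sub_le _ _).trans (add_le_add (opNorm_comp_le _ _) ?_)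
        rw [norm_rankOne, hz, mul_one]
        exact norm_add_le _ _
    _ ≤ 2 * ‖p‖ * ‖F‖ + (s * ‖p‖ ^ 2 + 5 * ‖F‖ ^ 2 / s) := by
        rw [norm_smul, hw, mul_one, Real.norm_of_nonneg (by positivity)]
        gcongr
        exact norm_starProjection_singleton_sub_le hw hu.norm_eq_one
    _ ≤ 2 * (4 / 3 * ‖F‖ / s) * ‖F‖ + (s * (4 / 3 * ‖F‖ / s) ^ 2 + 5 * ‖F‖ ^ 2 / s) := by
        gcongr
    _ = 85 / 9 * ‖F‖ ^ 2 / s := by field_simp; ring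
    _ ≤ 10 * ‖F‖ ^ 2 / s := by gcongr; norm_num

theorem norm_starProjection_comp_rankOne_add_sub_le {x : U} {y : V} (hx : x ≠ 0) (hy : y ≠ 0)
    (hF : 4 * ‖F‖ ≤ ‖x‖ * ‖y‖) (hu : IsTopLeftSingularVector (rankOne ℝ x y + F) u) :
    ‖(ℝ ∙ u).starProjection ∘L (rankOne ℝ x y + F) - (rankOne ℝ x y
        + (ℝ ∙ x).starProjection ∘L F
        + (ℝ ∙ x)ᗮ.starProjection ∘L F ∘L (ℝ ∙ y).starProjection)‖ ≤
      10 * ‖F‖ ^ 2 / (‖x‖ * ‖y‖) := by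
  have norm_x : ‖x‖ ≠ 0 := norm_ne_zero_iff.2 hx
  have norm_y : ‖y‖ ≠ 0 := norm_ne_zero_iff.2 hy
  have span_x : (ℝ ∙ ‖x‖⁻¹ • x) = ℝ ∙ x :=
    span_singleton_smul_eq (inv_ne_zero norm_x).isUnit x
  have span_y : (ℝ ∙ ‖y‖⁻¹ • y) = ℝ ∙ y :=
    span_singleton_smul_eq (inv_ne_zero norm_y).isUnit y
  have normalized : rankOne ℝ x y = (‖x‖ * ‖y‖) • rankOne ℝ (‖x‖⁻¹ • x) (‖y‖⁻¹ • y) := by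
    ext v
    simp only [_root_.smul_apply, rankOne_apply, real_inner_smul_left, smul_smul]
    congr 1
    field_simp
  simp only [normalized, ← span_x, ← span_y] at hu ⊢
  exact norm_starProjection_comp_sub_le (norm_smul_inv_norm hx) (norm_smul_inv_norm hy)
    (by positivity) hF hu

end RankOnePerturbation

section MatrixTransfer

open InnerProductSpace ContinuousLinearMap WithLp
open scoped InnerProduct RealInnerProductSpace

variable {m n : Type*} [Fintype m] [Fintype n]

theorem real_inner_toLp_toLp (x y : m → ℝ) : ⟪toLp 2 x, toLp 2 y⟫ = x ⬝ᵥ y := by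
  rw [EuclideanSpace.inner_toLp_toLp, star_trivial, dotProduct_comm]

theorem real_norm_toLp_sq (x : m → ℝ) : ‖toLp 2 x‖ ^ 2 = x ⬝ᵥ x := by
  rw [← real_inner_self_eq_norm_sq, real_inner_toLp_toLp]

variable [DecidableEq n]

/-- The operator between Euclidean spaces defined by a rectangular real matrix. Mathlib's
`Matrix.toEuclideanCLM` covers square matrices only. -/
noncomputable def euclideanMap (M : Matrix m n ℝ) :
    EuclideanSpace ℝ n →L[ℝ] EuclideanSpace ℝ m :=
  (toEuclideanLin M).toContinuousLinearMap

theorem euclideanMap_toLp (M : Matrix m n ℝ) (v : n → ℝ) :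
    euclideanMap M (toLp 2 v) = toLp 2 (M *ᵥ v) :=
  toLpLin_toLp 2 2 M v

theorem adjoint_euclideanMap [DecidableEq m] (M : Matrix m n ℝ) :
    (euclideanMap M)† = euclideanMap Mᵀ := by
  refine ((eq_adjoint_iff (euclideanMap Mᵀ) (euclideanMap M)).2 fun x y => ?_).symm
  obtain ⟨v, rfl⟩ := toLp_surjective 2 x
  obtain ⟨w, rfl⟩ := toLp_surjective 2 y
  rw [euclideanMap_toLp, euclideanMap_toLp, real_inner_toLp_toLp, real_inner_toLp_toLp,
    mulVec_transpose, dotProduct_mulVec]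

theorem euclideanMap_vecMulVec_add (x : m → ℝ) (y : n → ℝ) (F : Matrix m n ℝ) :
    euclideanMap (vecMulVec x y + F) = rankOne ℝ (toLp 2 x) (toLp 2 y) + euclideanMap F := by
  ext v : 1
  obtain ⟨v, rfl⟩ := toLp_surjective 2 v
  rw [_root_.add_apply, euclideanMap_toLp, euclideanMap_toLp, rankOne_apply, real_inner_toLp_toLp,
    add_mulVec, vecMulVec_mulVec, op_smul_eq_smul, toLp_add, toLp_smul]

theorem norm_euclideanMap_le {M : Matrix m n ℝ} {β : ℝ} (hβ : 0 ≤ β) (hM : ∀ i k, |M i k| ≤ β) :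
    ‖euclideanMap M‖ ≤ √(Fintype.card m * Fintype.card n) * β := by
  refine opNorm_le_bound _ (by positivity) fun x => ?_
  rw [← sq_le_sq₀ (norm_nonneg _) (by positivity), mul_pow, mul_pow, Real.sq_sqrt (by positivity)]
  obtain ⟨v, rfl⟩ := toLp_surjective 2 x
  rw [euclideanMap_toLp, EuclideanSpace.real_norm_sq_eq, EuclideanSpace.real_norm_sq_eq]
  calc ∑ i, (M *ᵥ v) i ^ 2
      ≤ ∑ i, (∑ k, M i k ^ 2) * ∑ k, v k ^ 2 :=
        Finset.sum_le_sum fun i _ => Finset.sum_mul_sq_le_sq_mul_sq Finset.univ (M i) v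
    _ ≤ ∑ _i : m, (∑ _k : n, β ^ 2) * ∑ k, v k ^ 2 := by
        gcongr ∑ i, (∑ k, ?_) * _ with i _ k _
        exact sq_le_sq.2 ((hM i k).trans (le_abs_self β))
    _ = Fintype.card m * Fintype.card n * β ^ 2 * ∑ k, v k ^ 2 := by
        simp only [Finset.sum_const, Finset.card_univ, nsmul_eq_mul]
        ring

theorem dotProduct_mulVec_le_of_eigenvalues_le {A : Matrix m m ℝ} (hA : A.IsHermitian) {μ : ℝ}
    (hμ : ∀ (ν : ℝ) (v : m → ℝ), v ≠ 0 → A *ᵥ v = ν • v → ν ≤ μ) (x : m → ℝ) :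
    x ⬝ᵥ A *ᵥ x ≤ μ * (x ⬝ᵥ x) := by
  classical
  have hB : (μ • 1 - A).IsHermitian := (isHermitian_one.smul (.all μ)).sub hA
  have posSemidef : (μ • 1 - A).PosSemidef := by
    refine hB.posSemidef_iff_eigenvalues_nonneg.2 fun j => ?_
    have eigen := hB.mulVec_eigenvectorBasis j
    rw [sub_mulVec, smul_mulVec, one_mulVec] at eigen
    refine sub_le_self_iff μ |>.1 (hμ _ (hB.eigenvectorBasis j) (fun h => ?_) ?_)
    · exact hB.eigenvectorBasis.orthonormal.ne_zero j (ofLp_injective 2 h)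
    · rw [sub_smul, ← eigen, sub_sub_cancel]
  have nonneg := posSemidef.dotProduct_mulVec_nonneg x
  rw [star_trivial, sub_mulVec, smul_mulVec, one_mulVec, dotProduct_sub, dotProduct_smul,
    smul_eq_mul] at nonneg
  exact sub_nonneg.1 nonneg

theorem isTopLeftSingularVector_of_isTopEigenvector {L : ℕ} {M : Matrix (Fin L) n ℝ}
    {u : Fin L → ℝ} (hu : IsTopEigenvector (M * Mᵀ) u) :
    IsTopLeftSingularVector (euclideanMap M) (toLp 2 u) := by
  obtain ⟨unit_u, μ, eigen, maximal⟩ := hu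
  have norm_adjoint_sq (x : Fin L → ℝ) :
      ‖((euclideanMap M)†) (toLp 2 x)‖ ^ 2 = x ⬝ᵥ (M * Mᵀ) *ᵥ x := by
    rw [adjoint_euclideanMap, euclideanMap_toLp, real_norm_toLp_sq, ← mulVec_mulVec,
      dotProduct_mulVec x, mulVec_transpose]
  have dot_self : u ⬝ᵥ u = 1 := by rw [← unit_u]; simp only [normSq, dotProduct, sq]
  have norm_u : ‖toLp 2 u‖ = 1 := by
    rw [← sq_eq_sq₀ (norm_nonneg _) zero_le_one, real_norm_toLp_sq, dot_self, one_pow]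
  have norm_sq_eq : ‖((euclideanMap M)†) (toLp 2 u)‖ ^ 2 = μ := by
    rw [norm_adjoint_sq, eigen, dotProduct_smul, dot_self, smul_eq_mul, mul_one]
  refine ⟨norm_u, ?_, fun x => ?_⟩
  · rw [norm_sq_eq, adjoint_euclideanMap, euclideanMap_toLp, euclideanMap_toLp, mulVec_mulVec,
      eigen, toLp_smul]
  · obtain ⟨x, rfl⟩ := toLp_surjective 2 x
    rw [← sq_le_sq₀ (norm_nonneg _) (by positivity), mul_pow, norm_sq_eq, norm_adjoint_sq,
      real_norm_toLp_sq]
    exact dotProduct_mulVec_le_of_eigenvalues_le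
      (by simpa using isHermitian_mul_conjTranspose_self M) maximal x

theorem abs_apply_single_le (T : EuclideanSpace ℝ n →L[ℝ] EuclideanSpace ℝ m) (i : m) (k : n) :
    |T (toLp 2 (Pi.single k 1)) i| ≤ ‖T‖ := by
  calc |T (toLp 2 (Pi.single k 1)) i| ≤ ‖T (toLp 2 (Pi.single k 1))‖ := by
        simpa using PiLp.norm_apply_le (T (toLp 2 (Pi.single k 1))) i
    _ ≤ ‖T‖ := by simpa using T.le_opNorm (toLp 2 (Pi.single k 1))

/-- The first-order term, in the perturbation `F`, of the leading singular component of
`vecMulVec x y + F`; in terms of the orthogonal projections `P` onto `x` and `Q` onto `y` it is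
`P F + F Q - P F Q`. -/
noncomputable def firstOrderTerm (x : m → ℝ) (y : n → ℝ) (F : Matrix m n ℝ) : Matrix m n ℝ :=
  of fun i k => x i * ((x ᵥ* F) k / (x ⬝ᵥ x)) + y k * ((F *ᵥ y) i / (y ⬝ᵥ y))
    - x i * y k * (x ⬝ᵥ F *ᵥ y / ((x ⬝ᵥ x) * (y ⬝ᵥ y)))

theorem vecMulVec_mul_vecMulVec_add_apply {κ : Type*} (x u : m → ℝ) (y : κ → ℝ)
    (F : Matrix m κ ℝ) (i : m) (k : κ) : (vecMulVec u u * (vecMulVec x y + F)) i k =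
      u i * ((u ⬝ᵥ x) * y k + (u ᵥ* F) k) := by
  rw [vecMulVec_mul, vecMulVec_apply, vecMul_add, vecMul_vecMulVec]
  simp

open Submodule in
theorem starProjection_comp_sub_apply_single (x : m → ℝ) (y : n → ℝ) (F : Matrix m n ℝ)
    {u : m → ℝ} (hu : ‖toLp 2 u‖ = 1) (i : m) (k : n) :
    ((ℝ ∙ toLp 2 u).starProjection ∘L (rankOne ℝ (toLp 2 x) (toLp 2 y) + euclideanMap F)
      - (rankOne ℝ (toLp 2 x) (toLp 2 y) + (ℝ ∙ toLp 2 x).starProjection ∘L euclideanMap F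
        + (ℝ ∙ toLp 2 x)ᗮ.starProjection ∘L euclideanMap F ∘L (ℝ ∙ toLp 2 y).starProjection))
      (toLp 2 (Pi.single k 1)) i =
    (vecMulVec u u * (vecMulVec x y + F)) i k - x i * y k - firstOrderTerm x y F i k := by
  have dotProduct_col (v : m → ℝ) : v ⬝ᵥ F.col k = (v ᵥ* F) k := rfl
  simp only [vecMulVec_mul_vecMulVec_add_apply, firstOrderTerm, of_apply,
    starProjection_orthogonal', _root_.sub_apply, _root_.add_apply,
    ContinuousLinearMap.comp_apply, one_apply_eq_self, rankOne_apply, starProjection_singleton,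
    map_add, map_smul, euclideanMap_toLp, real_inner_toLp_toLp, hu, mulVec_single_one,
    real_norm_toLp_sq, dotProduct_col]
  simp only [dotProduct_single, mul_one, one_pow, Real.ringHom_apply, div_one, PiLp.sub_apply,
    PiLp.add_apply, PiLp.smul_apply, smul_eq_mul]
  ring

theorem abs_vecMulVec_mul_sub_le {L : ℕ} {x : Fin L → ℝ} {y : n → ℝ} {F : Matrix (Fin L) n ℝ}
    {u : Fin L → ℝ} (hx : x ≠ 0) (hy : y ≠ 0)
    (hF : 4 * ‖euclideanMap F‖ ≤ ‖toLp 2 x‖ * ‖toLp 2 y‖)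
    (hu : IsTopEigenvector ((vecMulVec x y + F) * (vecMulVec x y + F)ᵀ) u) (i : Fin L) (k : n) :
    |(vecMulVec u u * (vecMulVec x y + F)) i k - x i * y k - firstOrderTerm x y F i k| ≤
      10 * ‖euclideanMap F‖ ^ 2 / (‖toLp 2 x‖ * ‖toLp 2 y‖) := by
  have hu' := isTopLeftSingularVector_of_isTopEigenvector hu
  rw [euclideanMap_vecMulVec_add] at hu'
  rw [← starProjection_comp_sub_apply_single x y F hu'.norm_eq_one]
  exact (abs_apply_single_le _ i k).trans (norm_starProjection_comp_rankOne_add_sub_le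
    ((toLp_eq_zero 2).not.2 hx) ((toLp_eq_zero 2).not.2 hy) hF hu')

end MatrixTransfer

section GeometricCoefficient

variable {b : ℝ}

/-- The least-squares coefficient of the first `M` terms of `f` along the geometric sequence
`1, b, b², …`. -/
noncomputable def geomCoeff (b : ℝ) (M : ℕ) (f : ℕ → ℝ) : ℝ :=
  (∑ n ∈ Finset.range M, b ^ n * f n) / ∑ n ∈ Finset.range M, (b ^ n) ^ 2

/-- The limit of `geomCoeff b M f` as `M → ∞`, for `|b| < 1` and bounded `f`. -/
noncomputable def limGeomCoeff (b : ℝ) (f : ℕ → ℝ) : ℝ :=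
  (1 - b ^ 2) * ∑' n, b ^ n * f n

theorem geomCoeff_sub (b : ℝ) (M : ℕ) (f g : ℕ → ℝ) :
    geomCoeff b M (fun n => f n - g n) = geomCoeff b M f - geomCoeff b M g := by
  simp only [geomCoeff, mul_sub, Finset.sum_sub_distrib, sub_div]

theorem geomCoeff_const_mul (b c : ℝ) (M : ℕ) (f : ℕ → ℝ) :
    geomCoeff b M (fun n => c * f n) = c * geomCoeff b M f := by
  simp only [geomCoeff, mul_left_comm _ c, ← Finset.mul_sum, mul_div_assoc]

theorem limGeomCoeff_const_mul (b c : ℝ) (f : ℕ → ℝ) :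
    limGeomCoeff b (fun n => c * f n) = c * limGeomCoeff b f := by
  simp only [limGeomCoeff, mul_left_comm _ c, tsum_mul_left]

theorem summable_pow_mul_of_abs_le (hb₀ : 0 ≤ b) (hb₁ : b < 1) {f : ℕ → ℝ} {β : ℝ}
    (hf : ∀ n, |f n| ≤ β) : Summable fun n => b ^ n * f n := by
  refine .of_norm_bounded ((summable_geometric_of_lt_one hb₀ hb₁).mul_right β) fun n => ?_
  rw [norm_mul, Real.norm_of_nonneg (pow_nonneg hb₀ n), Real.norm_eq_abs]
  exact mul_le_mul_of_nonneg_left (hf n) (pow_nonneg hb₀ n)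

theorem limGeomCoeff_sub (hb₀ : 0 ≤ b) (hb₁ : b < 1) {f g : ℕ → ℝ} {β γ : ℝ}
    (hf : ∀ n, |f n| ≤ β) (hg : ∀ n, |g n| ≤ γ) :
    limGeomCoeff b (fun n => f n - g n) = limGeomCoeff b f - limGeomCoeff b g := by
  simp only [limGeomCoeff, mul_sub, (summable_pow_mul_of_abs_le hb₀ hb₁ hf).tsum_sub
    (summable_pow_mul_of_abs_le hb₀ hb₁ hg)]

theorem sum_pow_mul_one_add_pow (hb : b ≠ 1) (M : ℕ) :
    (∑ n ∈ Finset.range M, b ^ n) * (1 + b ^ M) =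
      (1 + b) * ∑ n ∈ Finset.range M, (b ^ n) ^ 2 := by
  have geom := geom_sum_mul b M
  have geom_sq := geom_sum_mul (b ^ 2) M
  simp only [pow_right_comm b 2] at geom_sq
  refine mul_left_cancel₀ (sub_ne_zero.2 hb) ?_
  linear_combination (1 + b ^ M) * geom - geom_sq

theorem abs_geomCoeff_le (hb₀ : 0 ≤ b) (hb₁ : b < 1) {f : ℕ → ℝ} {β : ℝ}
    (hf : ∀ n, |f n| ≤ β) (M : ℕ) : |geomCoeff b M f| ≤ 2 * β := by
  have hβ : 0 ≤ β := (abs_nonneg _).trans (hf 0)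
  have sum_le : ∑ n ∈ Finset.range M, b ^ n ≤ 2 * ∑ n ∈ Finset.range M, (b ^ n) ^ 2 := by
    calc ∑ n ∈ Finset.range M, b ^ n ≤ (∑ n ∈ Finset.range M, b ^ n) * (1 + b ^ M) :=
          le_mul_of_one_le_right (by positivity) (by linarith [pow_nonneg hb₀ M])
      _ = (1 + b) * ∑ n ∈ Finset.range M, (b ^ n) ^ 2 := sum_pow_mul_one_add_pow hb₁.ne M
      _ ≤ 2 * ∑ n ∈ Finset.range M, (b ^ n) ^ 2 := by gcongr; linarith
  rw [geomCoeff, abs_div, abs_of_nonneg (by positivity : 0 ≤ ∑ n ∈ Finset.range M, (b ^ n) ^ 2)]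
  refine div_le_of_le_mul₀ (by positivity) (by positivity) ?_
  calc |∑ n ∈ Finset.range M, b ^ n * f n| ≤ ∑ n ∈ Finset.range M, b ^ n * β := by
        refine (Finset.abs_sum_le_sum_abs _ _).trans (Finset.sum_le_sum fun n _ => ?_)
        rw [abs_mul, abs_of_nonneg (pow_nonneg hb₀ n)]
        gcongr
        exact hf n
    _ = (∑ n ∈ Finset.range M, b ^ n) * β := (Finset.sum_mul _ _ _).symm
    _ ≤ 2 * β * ∑ n ∈ Finset.range M, (b ^ n) ^ 2 := by nlinarith

theorem abs_limGeomCoeff_sub_sum_le (hb₀ : 0 ≤ b) (hb₁ : b < 1) {f : ℕ → ℝ} {β : ℝ}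
    (hf : ∀ n, |f n| ≤ β) (M : ℕ) :
    |limGeomCoeff b f - (1 - b ^ 2) * ∑ n ∈ Finset.range M, b ^ n * f n| ≤ 2 * β * b ^ M := by
  have hβ : 0 ≤ β := (abs_nonneg _).trans (hf 0)
  have tail_le : |∑' n, b ^ n * f n - ∑ n ∈ Finset.range M, b ^ n * f n| ≤
      β * b ^ M / (1 - b) := by
    rw [abs_sub_comm]
    refine norm_sub_le_of_geometric_bound_of_hasSum hb₁ (fun n => ?_)
      (summable_pow_mul_of_abs_le hb₀ hb₁ hf).hasSum M
    rw [norm_mul, Real.norm_of_nonneg (pow_nonneg hb₀ n), mul_comm]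
    exact mul_le_mul_of_nonneg_right (hf n) (pow_nonneg hb₀ n)
  have one_sub_pos : 0 < 1 - b := sub_pos.2 hb₁
  rw [limGeomCoeff, ← mul_sub, abs_mul, abs_of_nonneg (by nlinarith)]
  calc (1 - b ^ 2) * _ ≤ (1 - b ^ 2) * (β * b ^ M / (1 - b)) := by
        gcongr
        nlinarith
    _ = (1 + b) * (β * b ^ M) := by field_simp; ring
    _ ≤ 2 * (β * b ^ M) := by gcongr; linarith
    _ = 2 * β * b ^ M := by ring

theorem abs_limGeomCoeff_le (hb₀ : 0 ≤ b) (hb₁ : b < 1) {f : ℕ → ℝ} {β : ℝ}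
    (hf : ∀ n, |f n| ≤ β) : |limGeomCoeff b f| ≤ 2 * β := by
  simpa using abs_limGeomCoeff_sub_sum_le hb₀ hb₁ hf 0

theorem abs_limGeomCoeff_sub_geomCoeff_le (hb₀ : 0 ≤ b) (hb₁ : b < 1) {f : ℕ → ℝ} {β : ℝ}
    (hf : ∀ n, |f n| ≤ β) {M : ℕ} (hM : 0 < M) :
    |limGeomCoeff b f - geomCoeff b M f| ≤ 4 * β * b ^ M := by
  have sum_sq_pos : 0 < ∑ n ∈ Finset.range M, (b ^ n) ^ 2 := by
    refine Finset.sum_pos' (fun n _ => sq_nonneg _) ⟨0, Finset.mem_range.2 hM, by simp⟩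
  have geom_sq := geom_sum_mul (b ^ 2) M
  simp only [pow_right_comm b 2] at geom_sq
  have truncation : (1 - b ^ 2) * ∑ n ∈ Finset.range M, b ^ n * f n =
      geomCoeff b M f * (1 - (b ^ M) ^ 2) := by
    rw [geomCoeff, div_mul_eq_mul_div, eq_div_iff sum_sq_pos.ne']
    linear_combination -(∑ n ∈ Finset.range M, b ^ n * f n) * geom_sq
  have hβ : 0 ≤ β := (abs_nonneg _).trans (hf 0)
  have pow_sq_le : (b ^ M) ^ 2 ≤ b ^ M :=
    pow_le_of_le_one (pow_nonneg hb₀ M) (pow_le_one₀ hb₀ hb₁.le) two_ne_zero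
  calc |limGeomCoeff b f - geomCoeff b M f|
      = |(limGeomCoeff b f - (1 - b ^ 2) * ∑ n ∈ Finset.range M, b ^ n * f n)
          - geomCoeff b M f * (b ^ M) ^ 2| := by rw [truncation]; ring_nf
    _ ≤ 2 * β * b ^ M + 2 * β * b ^ M := by
        refine (abs_sub _ _).trans (add_le_add (abs_limGeomCoeff_sub_sum_le hb₀ hb₁ hf M) ?_)
        rw [abs_mul, abs_of_nonneg (sq_nonneg (b ^ M))]
        exact mul_le_mul (abs_geomCoeff_le hb₀ hb₁ hf M) pow_sq_le (sq_nonneg _) (by positivity)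
    _ = 4 * β * b ^ M := by ring

/-- The first-order term of the leading singular component, with rows and columns counted from
the last ones; see `firstOrderTerm_Wvec_revHankelOf`. -/
noncomputable def truncFirstOrder (b : ℝ) (L K : ℕ) (f : ℕ → ℝ) (p q : ℕ) : ℝ :=
  b ^ p * geomCoeff b L (fun n => f (n + q)) + b ^ q * geomCoeff b K (fun n => f (p + n))
    - b ^ p * b ^ q * geomCoeff b L fun m => geomCoeff b K fun n => f (m + n)

/-- The limit of `truncFirstOrder b L K f p q` as `L, K → ∞`. -/
noncomputable def limFirstOrder (b : ℝ) (f : ℕ → ℝ) (p q : ℕ) : ℝ :=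
  b ^ p * limGeomCoeff b (fun n => f (n + q)) + b ^ q * limGeomCoeff b (fun n => f (p + n))
    - b ^ p * b ^ q * limGeomCoeff b fun m => limGeomCoeff b fun n => f (m + n)

theorem abs_mul_add_mul_sub_mul_le {s t x y z ε₁ ε₂ ε₃ : ℝ} (hs : s ∈ Set.Icc 0 1)
    (ht : t ∈ Set.Icc 0 1) (hx : |x| ≤ ε₁) (hy : |y| ≤ ε₂) (hz : |z| ≤ ε₃) :
    |s * x + t * y - s * t * z| ≤ ε₁ + ε₂ + ε₃ := by
  have damp {r v ε : ℝ} (hr : r ∈ Set.Icc 0 1) (hv : |v| ≤ ε) : |r * v| ≤ ε := by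
    rw [abs_mul, abs_of_nonneg hr.1]
    exact (mul_le_of_le_one_left (abs_nonneg v) hr.2).trans hv
  calc |s * x + t * y - s * t * z| ≤ |s * x| + |t * y| + |s * t * z| :=
        (abs_sub _ _).trans (by gcongr; exact abs_add_le _ _)
    _ ≤ ε₁ + ε₂ + ε₃ := add_le_add (add_le_add (damp hs hx) (damp ht hy))
        (damp ⟨mul_nonneg hs.1 ht.1, mul_le_one₀ hs.2 ht.1 ht.2⟩ hz)

theorem abs_limFirstOrder_le (hb₀ : 0 ≤ b) (hb₁ : b < 1) {f : ℕ → ℝ} {β : ℝ}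
    (hf : ∀ n, |f n| ≤ β) (p q : ℕ) : |limFirstOrder b f p q| ≤ 8 * β := by
  have pow_mem (n : ℕ) : b ^ n ∈ Set.Icc 0 1 := ⟨pow_nonneg hb₀ n, pow_le_one₀ hb₀ hb₁.le⟩
  have bound := abs_mul_add_mul_sub_mul_le (pow_mem p) (pow_mem q)
    (abs_limGeomCoeff_le hb₀ hb₁ fun n => hf (n + q))
    (abs_limGeomCoeff_le hb₀ hb₁ fun n => hf (p + n))
    (abs_limGeomCoeff_le hb₀ hb₁ fun m => abs_limGeomCoeff_le hb₀ hb₁ fun n => hf (m + n))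
  exact bound.trans_eq (by ring)

theorem abs_limGeomCoeff_limGeomCoeff_sub_le (hb₀ : 0 ≤ b) (hb₁ : b < 1) {f : ℕ → ℝ} {β : ℝ}
    (hf : ∀ n, |f n| ≤ β) {L K : ℕ} (hL : 0 < L) (hK : 0 < K) :
    |limGeomCoeff b (fun m => limGeomCoeff b fun n => f (m + n))
        - geomCoeff b L (fun m => geomCoeff b K fun n => f (m + n))| ≤
      8 * β * b ^ L + 8 * β * b ^ K := by
  have outer := abs_limGeomCoeff_sub_geomCoeff_le hb₀ hb₁
    (fun m => abs_limGeomCoeff_le hb₀ hb₁ fun n => hf (m + n)) hL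
  have inner := abs_geomCoeff_le hb₀ hb₁
    (fun m => abs_limGeomCoeff_sub_geomCoeff_le hb₀ hb₁ (fun n => hf (m + n)) hK) L
  rw [geomCoeff_sub] at inner
  refine (abs_sub_le _ _ _).trans ((add_le_add outer inner).trans_eq ?_)
  ring

theorem abs_truncFirstOrder_sub_le (hb₀ : 0 ≤ b) (hb₁ : b < 1) {f : ℕ → ℝ} {β : ℝ}
    (hf : ∀ n, |f n| ≤ β) {L K : ℕ} (hL : 0 < L) (hLK : L ≤ K) (p q : ℕ) :
    |truncFirstOrder b L K f p q - limFirstOrder b f p q| ≤ 24 * β * b ^ L := by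
  have hβ : 0 ≤ β := (abs_nonneg _).trans (hf 0)
  have hK : 0 < K := hL.trans_le hLK
  have pow_mem (n : ℕ) : b ^ n ∈ Set.Icc 0 1 := ⟨pow_nonneg hb₀ n, pow_le_one₀ hb₀ hb₁.le⟩
  have bound := abs_mul_add_mul_sub_mul_le (pow_mem p) (pow_mem q)
    (abs_limGeomCoeff_sub_geomCoeff_le hb₀ hb₁ (fun n => hf (n + q)) hL)
    (abs_limGeomCoeff_sub_geomCoeff_le hb₀ hb₁ (fun n => hf (p + n)) hK)
    (abs_limGeomCoeff_limGeomCoeff_sub_le hb₀ hb₁ hf hL hK)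
  have pow_le : β * b ^ K ≤ β * b ^ L :=
    mul_le_mul_of_nonneg_left (pow_le_pow_of_le_one hb₀ hb₁.le hLK) hβ
  calc |truncFirstOrder b L K f p q - limFirstOrder b f p q|
      = |limFirstOrder b f p q - truncFirstOrder b L K f p q| := abs_sub_comm _ _
    _ ≤ _ := by
        refine le_of_eq_of_le (congrArg abs ?_) bound
        rw [limFirstOrder, truncFirstOrder]
        ring
    _ ≤ 24 * β * b ^ L := by linarith

theorem limFirstOrder_const_mul (b c : ℝ) (f : ℕ → ℝ) (p q : ℕ) :
    limFirstOrder b (fun n => c * f n) p q = c * limFirstOrder b f p q := by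
  simp only [limFirstOrder, limGeomCoeff_const_mul]
  ring

end GeometricCoefficient

section HarmonicNoise

open Real Finset

variable {a : ℝ}

theorem tsum_pow_mul_cos {b : ℝ} (hb₀ : 0 ≤ b) (hb₁ : b < 1) (ξ θ : ℝ) :
    (1 - 2 * b * cos ξ + b ^ 2) * ∑' n : ℕ, b ^ n * cos (θ - n * ξ) =
      cos θ - b * cos (θ + ξ) := by
  have summable_cos (ω : ℝ) : Summable fun n : ℕ => b ^ n * cos (ω - n * ξ) :=
    summable_pow_mul_of_abs_le hb₀ hb₁ fun n => abs_cos_le_one _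
  set h : ℕ → ℝ := fun n => b ^ n * cos (θ - n * ξ) - b * (b ^ n * cos (θ + ξ - n * ξ))
  have summable_h : Summable h := (summable_cos θ).sub ((summable_cos (θ + ξ)).mul_left b)
  have telescoping (n : ℕ) :
      h n - h (n + 1) = (1 - 2 * b * cos ξ + b ^ 2) * (b ^ n * cos (θ - n * ξ)) := by
    have next : θ - (n + 1 : ℕ) * ξ = θ - n * ξ - ξ := by push_cast; ring
    have next' : θ + ξ - (n + 1 : ℕ) * ξ = θ - n * ξ := by push_cast; ring
    have shift : θ + ξ - n * ξ = θ - n * ξ + ξ := by ring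
    simp only [h, next, next', shift, cos_add, cos_sub _ ξ]
    ring
  rw [← tsum_mul_left]
  simp only [← telescoping]
  rw [summable_h.tsum_sub ((summable_nat_add_iff 1).2 summable_h), summable_h.tsum_eq_zero_add]
  simp [h]

theorem limGeomCoeff_cos (ha : 1 < a) (ξ θ : ℝ) :
    limGeomCoeff a⁻¹ (fun n => cos (θ - n * ξ)) = Gfun a ξ * (a * cos θ - cos (θ + ξ)) := by
  have a_pos : 0 < a := by positivity
  have denominator_pos : 0 < a ^ 2 + 1 - 2 * a * cos ξ := by
    nlinarith [cos_le_one ξ, sq_pos_of_pos (sub_pos.2 ha)]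
  have sum_eq := tsum_pow_mul_cos (inv_pos.2 a_pos).le (inv_lt_one_of_one_lt₀ ha) ξ θ
  rw [limGeomCoeff, Gfun, div_mul_eq_mul_div, eq_div_iff (by positivity)]
  generalize ∑' n : ℕ, a⁻¹ ^ n * cos (θ - n * ξ) = S at sum_eq ⊢
  field_simp at sum_eq ⊢
  linear_combination (a ^ 2 - 1) * sum_eq

theorem sum_antidiagonal_pow_mul_cos (ha : a ≠ 0) (ξ ψ : ℝ) (ℓ : ℕ) :
    ∑ x ∈ antidiagonal ℓ, a⁻¹ ^ x.2 * (a * cos (ψ - x.1 * ξ) - cos (ψ - x.1 * ξ + ξ)) =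
      a * cos (ψ - ℓ * ξ) - a⁻¹ ^ ℓ * cos (ψ + ξ) := by
  induction ℓ with
  | zero => simp
  | succ ℓ ih =>
    have prev : ψ - (ℓ + 1 : ℕ) * ξ + ξ = ψ - ℓ * ξ := by push_cast; ring
    simp only [Nat.sum_antidiagonal_succ', pow_succ', mul_assoc, ← mul_sum, ih, prev]
    field_simp
    ring

theorem limFirstOrder_cos (ha : 1 < a) (ξ ψ : ℝ) (p q : ℕ) :
    limFirstOrder a⁻¹ (fun n => cos (ψ - n * ξ)) p q = Gfun a ξ *
      (a⁻¹ ^ p * (a * cos (ψ - q * ξ) - cos (ψ - q * ξ + ξ))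
        + a⁻¹ ^ q * (a * cos (ψ - p * ξ) - cos (ψ - p * ξ + ξ))
        - a⁻¹ ^ (p + q) * (Gfun a ξ *
          (a ^ 2 * cos ψ - 2 * a * cos (ψ + ξ) + cos (ψ + 2 * ξ)))) := by
  have shifted (m : ℕ) : limGeomCoeff a⁻¹ (fun n => cos (ψ - (m + n : ℕ) * ξ)) =
      Gfun a ξ * (a * cos (ψ - m * ξ) - cos (ψ - m * ξ + ξ)) := by
    rw [← limGeomCoeff_cos ha ξ (ψ - m * ξ)]
    congr! 3 with n
    push_cast
    ring
  have bounded (ω : ℝ) (m : ℕ) : |cos (ω - m * ξ)| ≤ 1 := abs_cos_le_one _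
  have repeated : limGeomCoeff a⁻¹ (fun m => a * cos (ψ - m * ξ) - cos (ψ - m * ξ + ξ)) =
      Gfun a ξ * (a ^ 2 * cos ψ - 2 * a * cos (ψ + ξ) + cos (ψ + 2 * ξ)) := by
    have shift (m : ℕ) : ψ - m * ξ + ξ = ψ + ξ - m * ξ := by ring
    simp only [shift]
    rw [limGeomCoeff_sub (by positivity) (inv_lt_one_of_one_lt₀ ha)
      (fun m => (abs_mul a _).trans_le (by grw [bounded ψ m])) (bounded (ψ + ξ)),
      limGeomCoeff_const_mul, limGeomCoeff_cos ha, limGeomCoeff_cos ha,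
      show ψ + 2 * ξ = ψ + ξ + ξ by ring]
    ring
  simp only [limFirstOrder, shifted, Nat.add_comm _ q, limGeomCoeff_const_mul, repeated, pow_add]
  ring

theorem sum_antidiagonal_limFirstOrder_cos (ha : 1 < a) (ξ ψ : ℝ) (ℓ : ℕ) :
    (∑ x ∈ antidiagonal ℓ, limFirstOrder a⁻¹ (fun n => cos (ψ - n * ξ)) x.1 x.2) / (ℓ + 1) =
      Gfun a ξ * (C1 a ξ ℓ * cos ψ + C2 a ξ ℓ * sin ψ) := by
  have sum_snd := sum_antidiagonal_pow_mul_cos (by positivity : a ≠ 0) ξ ψ ℓ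
  have sum_fst := (Nat.sum_antidiagonal_swap
    (f := fun x => a⁻¹ ^ x.2 * (a * cos (ψ - x.1 * ξ) - cos (ψ - x.1 * ξ + ξ)))).trans sum_snd
  simp only [Prod.fst_swap, Prod.snd_swap] at sum_fst
  have sum_diag (c : ℝ) :
      ∑ x ∈ antidiagonal ℓ, a⁻¹ ^ (x.1 + x.2) * c = (ℓ + 1) * (a⁻¹ ^ ℓ * c) := by
    rw [sum_congr rfl fun x hx => by rw [mem_antidiagonal.1 hx], sum_const,
      Nat.card_antidiagonal, nsmul_eq_mul, Nat.cast_succ]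
  simp only [limFirstOrder_cos ha, ← mul_sum, sum_sub_distrib, sum_add_distrib, sum_fst, sum_snd,
    sum_diag]
  simp only [C1, C2, _root_.zpow_neg, zpow_natCast, cos_add, cos_sub, sin_two_mul, cos_two_mul',
    inv_pow]
  field_simp
  rw [sin_sq]
  ring

end HarmonicNoise

section HankelStructure

open Finset

variable {a : ℝ} {L K : ℕ}

theorem hankelOf_expSignal (a : ℝ) (L K : ℕ) :
    hankelOf (expSignal a) L K = vecMulVec (Wvec a L) (Wvec a K) := by
  ext i k
  exact pow_add a i k

/-- The `L × K` Hankel matrix of a series whose terms `f 0, f 1, …` are listed backwards, so that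
`f 0` is the bottom right entry. Unlike a reflected `hankelOf`, it involves no truncated
subtraction, and the values of `f` beyond the matrix remain available for passing to the limit. -/
def revHankelOf (f : ℕ → ℝ) (L K : ℕ) : Matrix (Fin L) (Fin K) ℝ :=
  of fun i k => f (i.rev + k.rev)

theorem smul_revHankelOf (c : ℝ) (f : ℕ → ℝ) (L K : ℕ) :
    c • revHankelOf f L K = revHankelOf (fun n => c * f n) L K := rfl

theorem hankelOf_cosNoise (ξ φ : ℝ) {N : ℕ} (hN : L + K = N + 1) :
    hankelOf (cosNoise ξ φ) L K =
      revHankelOf (fun n => Real.cos (((N : ℝ) - 1) * ξ + φ - n * ξ)) L K := by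
  ext i k
  have index : (i : ℝ) + k = N - 1 - (i.rev + k.rev : ℕ) := by
    have index_nat : (i : ℕ) + k + (i.rev + k.rev) + 1 = N := by
      simp only [Fin.val_rev]
      omega
    rw [← index_nat]
    push_cast
    ring
  simp only [hankelOf, revHankelOf, cosNoise, of_apply, Nat.cast_add (i : ℕ) k, index]
  ring_nf

theorem Wvec_eq_rev (ha : a ≠ 0) {M : ℕ} (i : Fin M) :
    Wvec a M i = a ^ (M - 1) * a⁻¹ ^ (i.rev : ℕ) := by
  have split : M - 1 = i + (i.rev : ℕ) := by rw [Fin.val_rev]; omega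
  rw [split, pow_add, mul_assoc, ← mul_pow, mul_inv_cancel₀ ha, one_pow, mul_one]
  rfl

theorem Wvec_dotProduct_rev (ha : a ≠ 0) (M : ℕ) (f : ℕ → ℝ) :
    (Wvec a M ⬝ᵥ fun m => f m.rev) = a ^ (M - 1) * ∑ n ∈ range M, a⁻¹ ^ n * f n := by
  simp only [dotProduct, Wvec_eq_rev ha, mul_assoc, ← mul_sum]
  rw [← Fin.sum_univ_eq_sum_range fun n => a⁻¹ ^ n * f n]
  exact congrArg _ (Equiv.sum_comp Fin.revPerm fun m : Fin M => a⁻¹ ^ (m : ℕ) * f m)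

theorem Wvec_mul_dotProduct_div (ha : a ≠ 0) {M : ℕ} (i : Fin M) (f : ℕ → ℝ) :
    Wvec a M i * ((Wvec a M ⬝ᵥ fun m => f m.rev) / (Wvec a M ⬝ᵥ Wvec a M)) =
      a⁻¹ ^ (i.rev : ℕ) * geomCoeff a⁻¹ M f := by
  have norm_sq : Wvec a M ⬝ᵥ Wvec a M =
      a ^ (M - 1) * (a ^ (M - 1) * ∑ n ∈ range M, (a⁻¹ ^ n) ^ 2) := by
    have weights : Wvec a M = fun m : Fin M => a ^ (M - 1) * a⁻¹ ^ (m.rev : ℕ) :=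
      funext fun m => Wvec_eq_rev ha m
    conv_lhs => rw [congrArg (Wvec a M ⬝ᵥ ·) weights]
    rw [Wvec_dotProduct_rev ha M fun n => a ^ (M - 1) * a⁻¹ ^ n]
    simp only [mul_left_comm _ (a ^ (M - 1)), ← sq, ← mul_sum]
  have pow_ne : a ^ (M - 1) ≠ 0 := pow_ne_zero _ ha
  rw [norm_sq, Wvec_dotProduct_rev ha, Wvec_eq_rev ha, geomCoeff, mul_div_mul_left _ _ pow_ne]
  field_simp

theorem firstOrderTerm_Wvec_revHankelOf (ha : a ≠ 0) (f : ℕ → ℝ) (i : Fin L) (k : Fin K) :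
    firstOrderTerm (Wvec a L) (Wvec a K) (revHankelOf f L K) i k =
      truncFirstOrder a⁻¹ L K f i.rev k.rev := by
  set F := revHankelOf f L K
  have row (k : Fin K) : (Wvec a L ᵥ* F) k = Wvec a L ⬝ᵥ fun m => f (m.rev + k.rev) := rfl
  have column (m : Fin L) : (F *ᵥ Wvec a K) m = Wvec a K ⬝ᵥ fun n => f (m.rev + n.rev) :=
    dotProduct_comm _ _
  have column_coeff (m : Fin L) :
      Wvec a K k * ((F *ᵥ Wvec a K) m / (Wvec a K ⬝ᵥ Wvec a K)) =
        a⁻¹ ^ (k.rev : ℕ) * geomCoeff a⁻¹ K fun n => f (m.rev + n) := by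
    rw [column, Wvec_mul_dotProduct_div ha k fun n => f (m.rev + n)]
  have double :
      Wvec a L i * Wvec a K k * (Wvec a L ⬝ᵥ F *ᵥ Wvec a K /
          ((Wvec a L ⬝ᵥ Wvec a L) * (Wvec a K ⬝ᵥ Wvec a K))) =
        a⁻¹ ^ (i.rev : ℕ) * (a⁻¹ ^ (k.rev : ℕ) *
          geomCoeff a⁻¹ L fun m => geomCoeff a⁻¹ K fun n => f (m + n)) := by
    rw [← geomCoeff_const_mul, ← Wvec_mul_dotProduct_div ha i]
    simp only [← column_coeff]
    simp only [dotProduct, mul_left_comm _ (Wvec a K k), ← mul_sum, ← mul_div_assoc, ← sum_div]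
    field_simp
  simp only [firstOrderTerm, of_apply, row, column_coeff, double, truncFirstOrder]
  rw [Wvec_mul_dotProduct_div ha i fun n => f (n + k.rev)]
  ring

end HankelStructure

section Hankelization

open Finset

variable {L K : ℕ}

theorem hankelize_sub (Y Z : Matrix (Fin L) (Fin K) ℝ) (j : ℕ) :
    hankelize (Y - Z) j = hankelize Y j - hankelize Z j := by
  simp only [hankelize, ← sub_div, ← sum_sub_distrib, ite_sub_ite, sub_zero]
  rfl

theorem abs_hankelize_le {Y : Matrix (Fin L) (Fin K) ℝ} {ε : ℝ} (hε : 0 ≤ ε)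
    (hY : ∀ i k, |Y i k| ≤ ε) (j : ℕ) : |hankelize Y j| ≤ ε := by
  have count_nonneg : 0 ≤ ∑ i : Fin L, ∑ k : Fin K, if (i : ℕ) + k = j then (1 : ℝ) else 0 := by
    positivity
  rw [hankelize, abs_div, abs_of_nonneg count_nonneg]
  refine div_le_of_le_mul₀ count_nonneg hε ?_
  simp only [mul_sum]
  refine (abs_sum_le_sum_abs _ _).trans (sum_le_sum fun i _ => ?_)
  refine (abs_sum_le_sum_abs _ _).trans (sum_le_sum fun k _ => ?_)
  split_ifs
  · simpa using hY i k
  · simp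

theorem hankelize_hankelOf (x : ℕ → ℝ) {j : ℕ} (hL : 0 < L) (hK : 0 < K) (hj : j + 1 < L + K) :
    hankelize (hankelOf x L K) j = x j := by
  have count_pos : 0 < ∑ i : Fin L, ∑ k : Fin K, if (i : ℕ) + k = j then (1 : ℝ) else 0 := by
    refine sum_pos' (fun i _ => by positivity) ⟨⟨min j (L - 1), by omega⟩, mem_univ _, ?_⟩
    refine sum_pos' (fun k _ => by positivity) ⟨⟨j - min j (L - 1), by omega⟩, mem_univ _, ?_⟩
    simp
  rw [hankelize, div_eq_iff count_pos.ne']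
  simp only [mul_sum]
  refine sum_congr rfl fun i _ => sum_congr rfl fun k _ => ?_
  split_ifs with h
  · simp [hankelOf, h]
  · simp

theorem sum_sum_ite_add_eq {ℓ : ℕ} (hL : ℓ < L) (hK : ℓ < K) (g : ℕ → ℕ → ℝ) :
    (∑ i : Fin L, ∑ k : Fin K, if (i : ℕ) + k = ℓ then g i k else 0) =
      ∑ x ∈ antidiagonal ℓ, g x.1 x.2 := by
  have inner (i : ℕ) : (∑ k : Fin K, if i + k = ℓ then g i k else 0) =
      ∑ k ∈ range K, if i + k = ℓ then g i k else 0 :=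
    Fin.sum_univ_eq_sum_range (fun k => if i + k = ℓ then g i k else 0) K
  simp only [inner]
  rw [Fin.sum_univ_eq_sum_range fun i => ∑ k ∈ range K, if i + k = ℓ then g i k else 0,
    ← sum_product', ← sum_filter]
  refine sum_congr ?_ fun _ _ => rfl
  ext x
  simp only [mem_filter, mem_product, mem_range, HasAntidiagonal.mem_antidiagonal]
  omega

theorem hankelize_rev {ℓ : ℕ} (hL : ℓ < L) (hK : ℓ < K) (g : ℕ → ℕ → ℝ) :
    hankelize (of fun (i : Fin L) (k : Fin K) => g i.rev k.rev) (L + K - 2 - ℓ) =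
      (∑ x ∈ antidiagonal ℓ, g x.1 x.2) / (ℓ + 1) := by
  have rev_add_rev (i : Fin L) (k : Fin K) :
      (i : ℕ) + k = L + K - 2 - ℓ ↔ (i.rev : ℕ) + k.rev = ℓ := by
    simp only [Fin.val_rev]
    omega
  have sum_rev (h : ℕ → ℕ → ℝ) :
      (∑ i : Fin L, ∑ k : Fin K, if (i : ℕ) + k = L + K - 2 - ℓ then h i.rev k.rev else 0) =
        ∑ x ∈ antidiagonal ℓ, h x.1 x.2 := by
    rw [← sum_sum_ite_add_eq hL hK, ← Equiv.sum_comp Fin.revPerm]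
    refine sum_congr rfl fun i _ => ?_
    rw [← Equiv.sum_comp Fin.revPerm]
    simp only [rev_add_rev, Fin.revPerm_apply, Fin.rev_rev]
  rw [hankelize, sum_rev fun _ _ => 1]
  simp only [of_apply, sum_rev, sum_const, Nat.card_antidiagonal, nsmul_eq_mul, mul_one,
    Nat.cast_succ]

end Hankelization

section Reconstruction

open Finset WithLp

variable {a : ℝ}

theorem pow_pred_le_norm_Wvec (ha : 0 ≤ a) {M : ℕ} (hM : 0 < M) :
    a ^ (M - 1) ≤ ‖toLp 2 (Wvec a M)‖ := by
  have last := PiLp.norm_apply_le (toLp 2 (Wvec a M)) ⟨M - 1, Nat.sub_one_lt_of_lt hM⟩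
  simpa only [Wvec, Real.norm_of_nonneg (pow_nonneg ha _)] using last

theorem norm_euclideanMap_revHankelOf_le {f : ℕ → ℝ} {β : ℝ} (hf : ∀ n, |f n| ≤ β) (L K : ℕ) :
    ‖euclideanMap (revHankelOf f L K)‖ ≤ (L + K) * β := by
  have hβ : 0 ≤ β := (abs_nonneg _).trans (hf 0)
  have entry_le (i : Fin L) (k : Fin K) : |revHankelOf f L K i k| ≤ β := hf (i.rev + k.rev)
  have sqrt_le : √((L : ℝ) * K) ≤ L + K :=
    Real.sqrt_le_iff.2 ⟨by positivity, by nlinarith [sq_nonneg ((L : ℝ) + K)]⟩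
  calc ‖euclideanMap (revHankelOf f L K)‖ ≤ √((L : ℝ) * K) * β := by
        simpa only [Fintype.card_fin] using norm_euclideanMap_le hβ entry_le
    _ ≤ (L + K) * β := by gcongr

variable {L K : ℕ} {f : ℕ → ℝ} {β : ℝ} {u : Fin L → ℝ}

theorem pos_of_isTopEigenvector {A : Matrix (Fin L) (Fin L) ℝ} (hu : IsTopEigenvector A u) :
    0 < L := by
  refine Nat.pos_of_ne_zero ?_
  rintro rfl
  simpa [normSq] using hu.1

theorem abs_vecMulVec_mul_sub_limFirstOrder_le (ha : 1 < a) (hLK : L ≤ K)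
    (hf : ∀ n, |f n| ≤ β) (hsmall : 4 * ((L + K) * β) ≤ a ^ (L + K - 2))
    (hu : IsTopEigenvector ((hankelOf (expSignal a) L K + revHankelOf f L K) *
      (hankelOf (expSignal a) L K + revHankelOf f L K)ᵀ) u) (i : Fin L) (k : Fin K) :
    |(vecMulVec u u * (hankelOf (expSignal a) L K + revHankelOf f L K)) i k
        - hankelOf (expSignal a) L K i k
        - limFirstOrder a⁻¹ f i.rev k.rev| ≤
      10 * ((L + K) * β) ^ 2 / a ^ (L + K - 2) + 24 * β * a⁻¹ ^ L := by
  have hL : 0 < L := pos_of_isTopEigenvector hu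
  have hK : 0 < K := hL.trans_le hLK
  have a_pos : 0 < a := by positivity
  have Wvec_ne_zero {M : ℕ} (hM : 0 < M) : Wvec a M ≠ 0 := fun h =>
    (pow_pos a_pos 0).ne' (congrFun h ⟨0, hM⟩)
  have scale_le : a ^ (L + K - 2) ≤ ‖toLp 2 (Wvec a L)‖ * ‖toLp 2 (Wvec a K)‖ := by
    rw [show L + K - 2 = (L - 1) + (K - 1) by omega, pow_add]
    gcongr
    exacts [pow_pred_le_norm_Wvec a_pos.le hL, pow_pred_le_norm_Wvec a_pos.le hK]
  have noise_le := norm_euclideanMap_revHankelOf_le hf L K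
  rw [hankelOf_expSignal] at hu ⊢
  have perturbation := abs_vecMulVec_mul_sub_le (Wvec_ne_zero hL) (Wvec_ne_zero hK)
    (by linarith) hu i k
  rw [firstOrderTerm_Wvec_revHankelOf a_pos.ne'] at perturbation
  refine (abs_sub_le _ _ _).trans (add_le_add (perturbation.trans ?_)
    (abs_truncFirstOrder_sub_le (inv_pos.2 a_pos).le (inv_lt_one_of_one_lt₀ ha)
      hf hL hLK i.rev k.rev))
  gcongr

theorem abs_hankelize_sub_le (ha : 1 < a) (hLK : L ≤ K)
    (hf : ∀ n, |f n| ≤ β) (hsmall : 4 * ((L + K) * β) ≤ a ^ (L + K - 2))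
    (hu : IsTopEigenvector ((hankelOf (expSignal a) L K + revHankelOf f L K) *
      (hankelOf (expSignal a) L K + revHankelOf f L K)ᵀ) u) {j : ℕ} (hj : j + 1 < L + K) :
    |hankelize (vecMulVec u u * (hankelOf (expSignal a) L K + revHankelOf f L K)) j - a ^ j
        - hankelize (of fun (i : Fin L) (k : Fin K) =>
            limFirstOrder a⁻¹ f i.rev k.rev) j| ≤
      10 * ((L + K) * β) ^ 2 / a ^ (L + K - 2) + 24 * β * a⁻¹ ^ L := by
  have hL : 0 < L := pos_of_isTopEigenvector hu
  have hβ : 0 ≤ β := (abs_nonneg _).trans (hf 0)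
  have signal : hankelize (hankelOf (expSignal a) L K) j = a ^ j :=
    hankelize_hankelOf _ hL (hL.trans_le hLK) hj
  rw [← signal, ← hankelize_sub, ← hankelize_sub]
  exact abs_hankelize_le (by positivity)
    (abs_vecMulVec_mul_sub_limFirstOrder_le ha hLK hf hsmall hu) j

/-- For `ℓ < L` the left-hand side vanishes; for `ℓ ≥ L` the factor `a ^ ℓ * a⁻¹ ^ L` is at
least `1` and both terms are at most `8 * β`. -/
theorem abs_hankelize_limFirstOrder_sub_le (ha : 1 < a) (hf : ∀ n, |f n| ≤ β)
    (hLK : L ≤ K) (ℓ : ℕ) :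
    |hankelize (of fun (i : Fin L) (k : Fin K) => limFirstOrder a⁻¹ f i.rev k.rev)
        (L + K - 2 - ℓ)
        - (∑ x ∈ antidiagonal ℓ, limFirstOrder a⁻¹ f x.1 x.2) / (ℓ + 1)| ≤
      16 * β * a ^ ℓ * a⁻¹ ^ L := by
  have hβ : 0 ≤ β := (abs_nonneg _).trans (hf 0)
  have a_pos : 0 < a := by positivity
  have entry_le := abs_limFirstOrder_le (inv_pos.2 a_pos).le (inv_lt_one_of_one_lt₀ ha) hf
  obtain hℓ | hℓ := lt_or_ge ℓ L
  · rw [hankelize_rev hℓ (hℓ.trans_le hLK), sub_self, abs_zero]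
    positivity
  have hankelize_le := abs_hankelize_le (by positivity : 0 ≤ 8 * β)
    (fun (i : Fin L) (k : Fin K) => entry_le i.rev k.rev) (L + K - 2 - ℓ)
  have average_le :
      |(∑ x ∈ antidiagonal ℓ, limFirstOrder a⁻¹ f x.1 x.2) / (ℓ + 1)| ≤ 8 * β := by
    rw [abs_div, abs_of_nonneg (by positivity : (0 : ℝ) ≤ ℓ + 1), div_le_iff₀ (by positivity)]
    refine (abs_sum_le_sum_abs _ _).trans ((sum_le_sum fun x _ => entry_le x.1 x.2).trans_eq ?_)
    rw [sum_const, Nat.card_antidiagonal, nsmul_eq_mul, Nat.cast_succ, mul_comm]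
  have one_le : 1 ≤ a ^ ℓ * a⁻¹ ^ L := by
    rw [inv_pow, ← div_eq_mul_inv, one_le_div (by positivity)]
    exact pow_le_pow_right₀ ha.le hℓ
  calc _ ≤ 8 * β + 8 * β := (abs_sub _ _).trans (add_le_add hankelize_le average_le)
    _ ≤ 16 * β * (a ^ ℓ * a⁻¹ ^ L) := by nlinarith
    _ = 16 * β * a ^ ℓ * a⁻¹ ^ L := by ring

end Reconstruction

section Asymptotics

open Finset

variable {a : ℝ}

theorem exists_sq_div_pow_le (ha : 1 < a) :
    ∃ c > 0, ∀ L K : ℕ, L ≤ K → ((L : ℝ) + K) ^ 2 / a ^ (L + K - 2) ≤ c * a⁻¹ ^ L := by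
  have a_pos : 0 < a := by positivity
  obtain ⟨c, hc⟩ := (tendsto_pow_const_mul_const_pow_of_lt_one 2 (inv_pos.2 a_pos).le
    (inv_lt_one_of_one_lt₀ ha)).bddAbove_range
  have sq_mul_pow_le (K : ℕ) : (K : ℝ) ^ 2 * a⁻¹ ^ K ≤ c := hc ⟨K, rfl⟩
  have hc_pos : 0 < c := (by positivity : 0 < ((1 : ℕ) : ℝ) ^ 2 * a⁻¹ ^ 1).trans_le
    (sq_mul_pow_le 1)
  refine ⟨4 * a ^ 2 * c, by positivity, fun L K hLK => ?_⟩
  have pow_le : a ^ (L + K) ≤ a ^ 2 * a ^ (L + K - 2) := by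
    rw [← pow_add]
    exact pow_le_pow_right₀ ha.le (by omega)
  calc ((L : ℝ) + K) ^ 2 / a ^ (L + K - 2)
      ≤ a ^ 2 * (((L : ℝ) + K) ^ 2 * a⁻¹ ^ (L + K)) := by
        rw [div_eq_mul_inv, mul_left_comm, inv_pow]
        gcongr
        rw [inv_le_iff_one_le_mul₀ (by positivity), mul_right_comm, ← div_eq_mul_inv]
        exact (one_le_div (by positivity)).2 pow_le
    _ ≤ a ^ 2 * (((K : ℝ) + K) ^ 2 * a⁻¹ ^ (L + K)) := by gcongr
    _ = 4 * a ^ 2 * (K ^ 2 * a⁻¹ ^ K) * a⁻¹ ^ L := by rw [pow_add]; ring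
    _ ≤ 4 * a ^ 2 * c * a⁻¹ ^ L := by gcongr; exact sq_mul_pow_le K

theorem eventually_mul_le_pow_sub_two (ha : 1 < a) (c : ℝ) :
    ∀ᶠ n : ℕ in atTop, c * n ≤ a ^ (n - 2) := by
  have a_pos : 0 < a := by positivity
  have tendsto_zero := (tendsto_self_mul_const_pow_of_lt_one (inv_pos.2 a_pos).le
    (inv_lt_one_of_one_lt₀ ha)).const_mul (c * a ^ 2)
  rw [mul_zero] at tendsto_zero
  filter_upwards [tendsto_zero.eventually_le_const one_pos, eventually_ge_atTop 2] with n hn two_le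
  rw [pow_sub₀ a a_pos.ne' two_le, ← div_eq_mul_inv, le_div_iff₀ (by positivity)]
  rw [inv_pow, ← mul_assoc, ← div_eq_mul_inv, div_le_one (by positivity)] at hn
  linarith

theorem abs_recErr_sub_le (ha : 1 < a) (ξ φ : ℝ) {δ : ℝ} {N L K : ℕ} (hLK : L ≤ K)
    (hN : L + K = N + 1) (hsmall : 4 * ((L + K) * |δ|) ≤ a ^ (L + K - 2)) {u : Fin L → ℝ}
    (hu : IsTopEigenvector (HdeltaSq a ξ φ δ L K) u) (ℓ : ℕ) :
    |recErr a ξ φ δ L K u (N - 1 - ℓ) -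
        δ * Gfun a ξ * (C1 a ξ ℓ * Real.cos (((N : ℝ) - 1) * ξ + φ) +
          C2 a ξ ℓ * Real.sin (((N : ℝ) - 1) * ξ + φ))| ≤
      10 * ((L + K) * |δ|) ^ 2 / a ^ (L + K - 2) + 24 * |δ| * a⁻¹ ^ L
        + 16 * |δ| * a ^ ℓ * a⁻¹ ^ L := by
  set ψ := ((N : ℝ) - 1) * ξ + φ
  have noise_le (n : ℕ) : |δ * Real.cos (ψ - n * ξ)| ≤ |δ| := by
    rw [abs_mul]
    exact mul_le_of_le_one_right (abs_nonneg δ) (Real.abs_cos_le_one _)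
  have hL : 0 < L := pos_of_isTopEigenvector hu
  have limit : (∑ x ∈ antidiagonal ℓ,
      limFirstOrder a⁻¹ (fun n => δ * Real.cos (ψ - n * ξ)) x.1 x.2) / (ℓ + 1) =
        δ * Gfun a ξ * (C1 a ξ ℓ * Real.cos ψ + C2 a ξ ℓ * Real.sin ψ) := by
    simp only [limFirstOrder_const_mul, ← mul_sum, mul_div_assoc,
      sum_antidiagonal_limFirstOrder_cos ha, mul_assoc]
  simp only [HdeltaSq, hankelOf_cosNoise ξ φ hN, smul_revHankelOf] at hu
  simp only [recErr, hankelOf_cosNoise ξ φ hN, smul_revHankelOf]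
  rw [← limit, show N - 1 - ℓ = L + K - 2 - ℓ by omega]
  exact (abs_sub_le _ _ _).trans (add_le_add
    (abs_hankelize_sub_le ha hLK noise_le hsmall hu (by omega))
    (abs_hankelize_limFirstOrder_sub_le ha noise_le hLK ℓ))

end Asymptotics

theorem stmt_3_general {a : ℝ} (ha : 1 < a) (δ : ℝ) (ℓ : ℕ) :
    ∃ C > (0 : ℝ), ∃ N₀ : ℕ, ∀ (ξ φ : ℝ) (N L K : ℕ), N₀ ≤ N → L ≤ K → L + K = N + 1 →
      ∀ u : Fin L → ℝ, IsTopEigenvector (HdeltaSq a ξ φ δ L K) u →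
        |recErr a ξ φ δ L K u (N - 1 - ℓ) -
          δ * Gfun a ξ * (C1 a ξ ℓ * Real.cos (((N : ℝ) - 1) * ξ + φ) +
            C2 a ξ ℓ * Real.sin (((N : ℝ) - 1) * ξ + φ))| ≤
          C * a ^ (-(L : ℝ)) := by
  obtain ⟨c, hc, sq_div_pow_le⟩ := exists_sq_div_pow_le ha
  obtain ⟨N₀, small⟩ := eventually_atTop.1 (eventually_mul_le_pow_sub_two ha (4 * |δ|))
  refine ⟨10 * |δ| ^ 2 * c + 24 * |δ| + 16 * |δ| * a ^ ℓ + 1, by positivity, N₀,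
    fun ξ φ N L K hN₀ hLK hN u hu => ?_⟩
  have small_noise : 4 * ((L + K) * |δ|) ≤ a ^ (L + K - 2) := by
    have bound := small (L + K) (by omega)
    push_cast at bound
    linarith
  have quadratic_le : 10 * ((L + K) * |δ|) ^ 2 / a ^ (L + K - 2) ≤
      10 * |δ| ^ 2 * c * a⁻¹ ^ L :=
    calc 10 * ((L + K) * |δ|) ^ 2 / a ^ (L + K - 2)
        = 10 * |δ| ^ 2 * (((L : ℝ) + K) ^ 2 / a ^ (L + K - 2)) := by ring
      _ ≤ 10 * |δ| ^ 2 * (c * a⁻¹ ^ L) := by gcongr; exact sq_div_pow_le L K hLK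
      _ = 10 * |δ| ^ 2 * c * a⁻¹ ^ L := by ring
  have decay_nonneg : 0 ≤ a⁻¹ ^ L := by positivity
  rw [Real.rpow_neg (by positivity), Real.rpow_natCast, ← inv_pow]
  linarith [abs_recErr_sub_le ha ξ φ hLK hN small_noise hu ℓ]

/-- the asymptotic form of the last reconstruction errors
`r_{N-1-ℓ}(N)`, with remainder `O(a^{-L(N)})`. -/
theorem stmt_3 (a ξ φ α : ℝ) (ha : 1 < a) (hξ : ξ ∈ Set.Ioo 0 Real.pi)
    (hφ : φ ∈ Set.Ico 0 (2 * Real.pi)) (hα : α ∈ Set.Ioo (0 : ℝ) 1)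
    (L K : ℕ → ℕ)
    (hLK : ∀ N, 3 ≤ N → 1 < L N ∧ L N ≤ K N ∧ L N + K N = N + 1)
    (hlim : Tendsto (fun N : ℕ => (L N : ℝ) / (N : ℝ)) atTop (nhds α))
    (ℓ : ℕ) (δ : ℝ) :
    ∃ C > (0 : ℝ), ∃ N₀ : ℕ, ∀ N, N₀ ≤ N →
      ∀ u : Fin (L N) → ℝ, IsTopEigenvector (HdeltaSq a ξ φ δ (L N) (K N)) u →
        |recErr a ξ φ δ (L N) (K N) u (N - 1 - ℓ) -
          δ * Gfun a ξ * (C1 a ξ ℓ * Real.cos (((N : ℝ) - 1) * ξ + φ) +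
            C2 a ξ ℓ * Real.sin (((N : ℝ) - 1) * ξ + φ))| ≤
          C * a ^ (-(L N : ℝ)) := by
  obtain ⟨C, hC, N₀, bound⟩ := stmt_3_general ha δ ℓ
  exact ⟨C, hC, max N₀ 3, fun N hN =>
    have hLKN := hLK N (le_of_max_le_right hN)
    bound ξ φ N (L N) (K N) (le_of_max_le_left hN) hLKN.2.1 hLKN.2.2⟩
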